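/- Let F be a formal group law over a commutative ring R. For all f, g ∈ R((z)) and all n ≥ 1: (i) Res^F_{z=0} (𝒮^F_n f)(z) dz = 0; (ii) Res^F_{z=0} (𝒮^F_n f)(z)·g(z) dz = −Σ_{j=1}^{n} Res^F_{z=0} (𝒮^F_{n−j} f)(z)·(𝒮^F_j g)(z) dz. -/

import Mathlib

/-!
Coefficient-wise formal calculus for vertex `F`-algebras, following
M. Upmeier, "Vertex F-Algebras and Their Associated Lie Algebra".

Series in one, two or three variables are represented by their coefficient
functions `ℤ → R`, `ℤ → ℤ → R`, …; products are given by coefficient-wise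
(finite) sums, expressed via `finsum` (`∑ᶠ`).
-/

open scoped BigOperators

noncomputable section

/-- Generalized binomial coefficient `C(n,k) = n(n-1)⋯(n-k+1)/k!` for `n : ℤ`, `k : ℕ`. -/
def zbinom (n : ℤ) (k : ℕ) : ℤ :=
  if 0 ≤ n then (n.toNat.choose k : ℤ)
  else (-1 : ℤ) ^ k * (((k : ℤ) - n - 1).toNat.choose k : ℤ)

/-- `C(n,m)` for integer `m`, with `C(n,m) = 0` for `m < 0`. -/
def zbinomZ (n m : ℤ) : ℤ := if m < 0 then 0 else zbinom n m.toNat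

/-- `(-1)^n` for `n : ℤ`. -/
def msign (n : ℤ) : ℤ := if Even n then 1 else -1

section Series

variable {R : Type*} [CommRing R] {M : Type*} [AddCommGroup M] [Module R M]

/-- Product of a one-variable series with `R`-coefficients with an `M`-valued one. -/
def mulS (f : ℤ → R) (g : ℤ → M) : ℤ → M := fun n => ∑ᶠ i : ℤ, f i • g (n - i)

/-- The constant series `1` (one variable). -/
def oneS (R : Type*) [CommRing R] : ℤ → R := fun n => if n = 0 then 1 else 0

/-- Natural powers of a one-variable series. -/
def pow1 (f : ℤ → R) : ℕ → ℤ → R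
  | 0 => oneS R
  | k + 1 => mulS f (pow1 f k)

/-- Product of two-variable series. -/
def mulS2 (f : ℤ → ℤ → R) (g : ℤ → ℤ → M) : ℤ → ℤ → M :=
  fun a b => ∑ᶠ p : ℤ × ℤ, f p.1 p.2 • g (a - p.1) (b - p.2)

/-- The constant series `1` (two variables). -/
def oneS2 (R : Type*) [CommRing R] : ℤ → ℤ → R := fun a b => if a = 0 ∧ b = 0 then 1 else 0

/-- Natural powers of a two-variable series. -/
def pow2 (f : ℤ → ℤ → R) : ℕ → ℤ → ℤ → R
  | 0 => oneS2 R
  | k + 1 => mulS2 f (pow2 f k)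

/-- `f ∈ M((z))`: only finitely many negative powers. -/
def IsLaurent (f : ℤ → M) : Prop := ∃ N : ℤ, ∀ n : ℤ, n < N → f n = 0

/-- `f ∈ M((z,w))`: only finitely many nonzero coefficients with some negative index. -/
def IsLaurent2 (f : ℤ → ℤ → M) : Prop :=
  {p : ℤ × ℤ | (p.1 < 0 ∨ p.2 < 0) ∧ f p.1 p.2 ≠ 0}.Finite

/-- Formal derivative of a one-variable series. -/
def fderiv1 (f : ℤ → R) : ℤ → R := fun n => ((n + 1 : ℤ) : R) * f (n + 1)

/-- The polynomial `z - w` as a two-variable series. -/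
def zmw (R : Type*) [CommRing R] : ℤ → ℤ → R :=
  fun i j => if i = 1 ∧ j = 0 then 1 else if i = 0 ∧ j = 1 then -1 else 0

/-- `∂/∂w` of a two-variable series. -/
def d01 (f : ℤ → ℤ → R) : ℤ → ℤ → R := fun i j => ((j + 1 : ℤ) : R) * f i (j + 1)

/-- `∂/∂z` of a two-variable series. -/
def d10 (f : ℤ → ℤ → R) : ℤ → ℤ → R := fun i j => ((i + 1 : ℤ) : R) * f (i + 1) j

/-- Substitution `p(f(z,w))` of a two-variable series (zero constant term) into a
one-variable power series `p`. -/
def comp2 (p : ℤ → R) (f : ℤ → ℤ → R) : ℤ → ℤ → R :=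
  fun a b => ∑ᶠ m : ℕ, p (m : ℤ) * pow2 f m a b

/-- Substitution `p(f(z))` of a one-variable series (zero constant term) into a
one-variable power series `p`. -/
def comp1 (p : ℤ → R) (f : ℤ → R) : ℤ → R :=
  fun a => ∑ᶠ m : ℕ, p (m : ℤ) * pow1 f m a

/-- `(G - z)/z` for `G ≡ z (mod w)`. -/
def hzS (G : ℤ → ℤ → R) : ℤ → ℤ → R := fun i j => G (i + 1) j - oneS2 R i j

/-- Integer powers `i_{z,w} G^n`, for `G ≡ z (mod w)`, expanded in `R((z))⟦w⟧`:
the Newton expansion `z^n ∑_k C(n,k) ((G-z)/z)^k`. -/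
def izwPow (G : ℤ → ℤ → R) (n : ℤ) : ℤ → ℤ → R :=
  fun a b => ∑ᶠ k : ℕ, (zbinom n k : R) * pow2 (hzS G) k (a - n) b

/-- `(G - w)/w` for `G ≡ w (mod z)`. -/
def hwS (G : ℤ → ℤ → R) : ℤ → ℤ → R := fun i j => G i (j + 1) - oneS2 R i j

/-- Integer powers `i_{w,z} G^n`, for `G ≡ w (mod z)`, expanded in `R((w))⟦z⟧`. -/
def iwzPow (G : ℤ → ℤ → R) (n : ℤ) : ℤ → ℤ → R :=
  fun a b => ∑ᶠ k : ℕ, (zbinom n k : R) * pow2 (hwS G) k a (b - n)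

/-- `(G + w)/(-w)` for `G ≡ ι(w) (mod z)`. -/
def hwNegS (G : ℤ → ℤ → R) : ℤ → ℤ → R := fun i j => -G i (j + 1) - oneS2 R i j

/-- Integer powers `i_{w,z} G^n`, for `G ≡ -w(1+⋯) (mod z)` (e.g. `G = F(z, ι w)`),
expanded in `R((w))⟦z⟧`. -/
def iwzPowNeg (G : ℤ → ℤ → R) (n : ℤ) : ℤ → ℤ → R :=
  fun a b => (msign n : R) * ∑ᶠ k : ℕ, (zbinom n k : R) * pow2 (hwNegS G) k a (b - n)

/-- `(f + z)/(-z)` for a series `f = -z(1 + ⋯)` such as `ι(z)`. -/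
def hS (f : ℤ → R) : ℤ → R := fun j => -f (j + 1) - oneS R j

/-- Integer powers `f(z)^n` (`n : ℤ`) for `f = -z(1+⋯)`, e.g. `f = ι(z)`. -/
def iotaPow (f : ℤ → R) (n : ℤ) : ℤ → R :=
  fun a => (msign n : R) * ∑ᶠ k : ℕ, (zbinom n k : R) * pow1 (hS f) k (a - n)

/-- `f - 1` for a power series with constant term `1`. -/
def hOneS (f : ℤ → R) : ℤ → R := fun j => f j - oneS R j

/-- Multiplicative inverse of a power series with constant term `1`. -/
def invOne (f : ℤ → R) : ℤ → R :=
  fun a => ∑ᶠ k : ℕ, ((-1 : R) ^ k) * pow1 (hOneS f) k a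

end Series

/-- A (one-dimensional, commutative) formal group law `F(z,w)` over `R`, together with
its (unique) inverse `ι`. -/
structure FormalGroupLaw (R : Type*) [CommRing R] where
  F : ℤ → ℤ → R
  F_supp : ∀ i j : ℤ, i < 0 ∨ j < 0 → F i j = 0
  /-- `F(z,0) = z`, so that `F(z,w) = z + w + O(zw)` using commutativity. -/
  F_modw : ∀ i : ℤ, F i 0 = if i = 1 then 1 else 0
  F_comm : ∀ i j : ℤ, F i j = F j i
  /-- associativity `F(F(z,w),v) = F(z,F(w,v))`, coefficient-wise. -/
  F_assoc : ∀ a b c : ℤ,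
    (∑ᶠ m : ℕ, F (m : ℤ) c * pow2 F m a b) = ∑ᶠ n : ℕ, F a (n : ℤ) * pow2 F n b c
  /-- the inverse `ι(z) = -z + O(z²)`. -/
  inv : ℤ → R
  inv_supp : ∀ n : ℤ, n < 1 → inv n = 0
  inv_one : inv 1 = -1
  /-- `F(z, ι(z)) = 0`, coefficient-wise. -/
  inv_eq : ∀ n : ℤ, (∑ᶠ p : ℤ × ℕ, F p.1 (p.2 : ℤ) * pow1 inv p.2 (n - p.1)) = 0

namespace FormalGroupLaw

variable {R : Type*} [CommRing R] {M : Type*} [AddCommGroup M] [Module R M]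

/-- The series `F(z, ι(w))`. -/
def Fzi (𝓕 : FormalGroupLaw R) : ℤ → ℤ → R :=
  fun i j => ∑ᶠ m : ℕ, 𝓕.F i (m : ℤ) * pow1 𝓕.inv m j

/-- The `F`-delta distribution `z⁻¹δ_F(w/z) = i_{z,w}F(z,ιw)⁻¹ - i_{w,z}F(z,ιw)⁻¹`. -/
def delta (𝓕 : FormalGroupLaw R) : ℤ → ℤ → R :=
  fun a b => izwPow 𝓕.Fzi (-1) a b - iwzPowNeg 𝓕.Fzi (-1) a b

/-- `p_F(z) = F^{0,1}(z,0)⁻¹`, the coefficient series of the invariant 1-form. -/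
def pF (𝓕 : FormalGroupLaw R) : ℤ → R := invOne (fun i => 𝓕.F i 1)

/-- `F`-residue: the coefficient of `z⁻¹` in `f(z)·p_F(z)`. -/
def resF (𝓕 : FormalGroupLaw R) (f : ℤ → M) : M := ∑ᶠ i : ℤ, 𝓕.pF i • f (-1 - i)

/-- The `F`-hyperderivative `𝒮^F_n f`, defined by `i_{z,w}f(F(z,w)) = ∑_n (𝒮^F_n f)(z) wⁿ`. -/
def hyper (𝓕 : FormalGroupLaw R) (n : ℕ) (f : ℤ → R) : ℤ → R :=
  fun a => ∑ᶠ m : ℤ, f m * izwPow 𝓕.F m a (n : ℤ)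

/-- `F`-binomial coefficients: `i_{z,w}F(z,w)^n = ∑_{i,j} binomF(n;i,j) z^i w^j`. -/
def binomF (𝓕 : FormalGroupLaw R) (n i j : ℤ) : R := izwPow 𝓕.F n i j

/-- `φ` is a logarithm of `F`: `φ(F(z,w)) = φ(z) + φ(w)`, `φ(0) = 0`, `φ'(0) = 1`. -/
def IsLogarithm (𝓕 : FormalGroupLaw R) (φ : ℤ → R) : Prop :=
  (∀ n : ℤ, n < 0 → φ n = 0) ∧ φ 0 = 0 ∧ φ 1 = 1 ∧
  ∀ a b : ℤ, (∑ᶠ m : ℕ, φ (m : ℤ) * pow2 𝓕.F m a b)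
    = (if b = 0 then φ a else 0) + (if a = 0 then φ b else 0)

end FormalGroupLaw

section Vertex

variable {R : Type*} [CommRing R] {V : Type*} [AddCommGroup V] [Module R V]

/-- For `c = ∑_m c_m v^m ∈ V((v))`, the substitution `v ↦ F(z,w)` (coefficient `(k,n)` of
`z^k w^n`, expanded in `V((z))⟦w⟧`). -/
def substF (𝓕 : FormalGroupLaw R) (c : ℤ → V) : ℤ → ℤ → V :=
  fun k n => ∑ᶠ m : ℤ, izwPow 𝓕.F m k n • c m

/-- Coefficients of `i_{z,w} Y(a, F(z,w)) (Y(b,w)c)`, where `Ya v = Y(a,·)v` and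
`d = Y(b,·)c`. -/
def substFProd (𝓕 : FormalGroupLaw R) (Ya : V → ℤ → V) (d : ℤ → V) : ℤ → ℤ → V :=
  fun k n => ∑ᶠ q : ℤ × ℤ, izwPow 𝓕.F q.1 k (n - q.2) • Ya (d q.2) q.1

end Vertex

/-- A vertex `F`-algebra `(V, 𝟙, 𝒮, Y)` over the formal group law `𝓕`.
`Y a b : ℤ → V` records the coefficients of `Y(a,z)b = ∑_k (Y a b k) z^k`, and
`S n` is the component `𝒮⁽ⁿ⁾` of the `F`-shift operator `𝒮(z) = ∑_{n≥0} 𝒮⁽ⁿ⁾ zⁿ`. -/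
structure VertexFAlgebra (R : Type*) [CommRing R] (𝓕 : FormalGroupLaw R)
    (V : Type*) [AddCommGroup V] [Module R V] where
  vac : V
  S : ℕ → V →ₗ[R] V
  Y : V →ₗ[R] V →ₗ[R] (ℤ → V)
  /-- `Y(a,z)b ∈ V((z))`. -/
  Y_laurent : ∀ a b : V, IsLaurent (Y a b)
  /-- `Y(a,z)𝟙` is holomorphic. -/
  vac_holo : ∀ (a : V) (k : ℤ), k < 0 → Y a vac k = 0
  /-- `Y(a,z)𝟙|_{z=0} = a`. -/
  creation : ∀ a : V, Y a vac 0 = a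
  /-- `Y(𝟙,z) = id`. -/
  Y_vac : ∀ (b : V) (k : ℤ), Y vac b k = if k = 0 then b else 0
  /-- `𝒮(0) = id`. -/
  S_zero : S 0 = LinearMap.id
  /-- `𝒮(z)𝟙 = 𝟙`. -/
  S_vac : ∀ n : ℕ, 1 ≤ n → S n vac = 0
  /-- `𝒮(z) ∘ 𝒮(w) = 𝒮(F(z,w))`, coefficient-wise. -/
  S_comp : ∀ (a : V) (i j : ℕ),
    S i (S j a) = ∑ᶠ m : ℕ, pow2 𝓕.F m (i : ℤ) (j : ℤ) • S m a
  /-- `F`-translation covariance `Y(𝒮(w)a, z)b = i_{z,w} Y(a,F(z,w))b`. -/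
  translation : ∀ (a b : V) (k : ℤ) (n : ℕ),
    Y (S n a) b k = substF 𝓕 (Y a b) k (n : ℤ)
  /-- weak `F`-associativity. -/
  weak_assoc : ∀ a b c : V, ∃ N : ℕ,
    mulS2 (pow2 𝓕.F N) (fun k l => Y (Y a b k) c l)
      = mulS2 (pow2 𝓕.F N) (substFProd 𝓕 (fun v => Y a v) (Y b c))
  /-- skew symmetry `Y(a,z)b = 𝒮(z)(Y(b,ι(z))a)`, coefficient-wise. -/
  skew : ∀ (a b : V) (k : ℤ),
    Y a b k = ∑ᶠ q : ℕ × ℤ, iotaPow 𝓕.inv q.2 (k - (q.1 : ℤ)) • S q.1 (Y b a q.2)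

end

/-!
Substituting `z ↦ F(z, w)` is a ring homomorphism `R((z)) → R((z))⟦w⟧`. More generally, let
`y = z + u` with `u ∈ R((z))⟦w⟧` divisible by `w`. The residue is invariant under the change of
variables `z ↦ y`: expand `f(y) = ∑ₖ (Dₖ f) uᵏ` in Hasse derivatives and move each `Dₖ` onto
`uᵏ D₁y = uᵏ + uᵏ D₁u` by parts; since `Dₖ(uᵏ D₁u) = Dₖ₊₁(uᵏ⁺¹)`, the sum telescopes to `f`.
Differentiating associativity shows that the substitution `z ↦ F(z, w)` fixes `p_F(z) dz`, so
`Res^F f(F(z, w)) dz` does not depend on `w`, which is (i). Then (ii) is (i) for the product `f g`,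
whose hyperderivatives satisfy the Leibniz rule because the substitution is multiplicative.
-/

namespace FormalCalculus

open PowerSeries LaurentSeries Finset

theorem zbinom_eq_choose (n : ℤ) (k : ℕ) : zbinom n k = Ring.choose n k := by
  unfold zbinom
  split_ifs with hn
  · lift n to ℕ using hn
    rw [Int.toNat_natCast, Ring.choose_natCast]
  · obtain ⟨m, hm⟩ := Int.eq_ofNat_of_zero_le (show 0 ≤ (k : ℤ) - n - 1 by omega)
    rw [← neg_neg n, Ring.choose_neg, neg_neg, hm, show -n + (k : ℤ) - 1 = (m : ℕ) by omega,
      Int.toNat_natCast, Ring.choose_natCast]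
    simp [Int.negOnePow_def, Units.smul_def]

theorem choose_neg_one_sub (j : ℤ) (k : ℕ) :
    Ring.choose (-1 - j) k = (-1) ^ k * Ring.choose (j + k) k := by
  rw [show -1 - j = -(1 + j) by ring, Ring.choose_neg, show 1 + j + (k : ℤ) - 1 = j + k by ring]
  simp [Int.negOnePow_def, Units.smul_def]

theorem finsum_int_eq_finsum_nat {M : Type*} [AddCommMonoid M] {f : ℤ → M}
    (hf : ∀ m < 0, f m = 0) : ∑ᶠ m : ℤ, f m = ∑ᶠ m : ℕ, f m := by
  rw [← finsum_mem_range (g := ((↑) : ℕ → ℤ)) Nat.cast_injective, finsum_mem_def,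
    Set.indicator_eq_self.mpr]
  exact fun m hm ↦ ⟨m.toNat, Int.toNat_of_nonneg (not_lt.mp fun h ↦ hm (hf m h))⟩

variable {R : Type*} [CommRing R]

theorem coeff_pow_mul_derivative (v : R⟦X⟧) (k : ℕ) :
    coeff k (v ^ k * d⁄dX R v) = coeff (k + 1) (v ^ (k + 1)) := by
  -- Both sides agree after multiplication by `k + 1`, which may be cancelled over `ℤ[X₀, X₁, …]`.
  have generic (w : (MvPolynomial ℕ ℤ)⟦X⟧) :
      coeff k (w ^ k * d⁄dX _ w) = coeff (k + 1) (w ^ (k + 1)) := by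
    have hmul : coeff (k + 1) (w ^ (k + 1)) * (k + 1 : MvPolynomial ℕ ℤ) =
        coeff k (w ^ k * d⁄dX _ w) * (k + 1) := by
      rw [← coeff_derivative, Derivation.leibniz_pow, map_nsmul, nsmul_eq_mul,
        Nat.add_sub_cancel, smul_eq_mul, mul_comm]
      push_cast
      rfl
    exact (mul_right_cancel₀ (by exact_mod_cast k.succ_ne_zero) hmul).symm
  let φ : MvPolynomial ℕ ℤ →+* R := MvPolynomial.eval₂Hom (Int.castRingHom R) fun i ↦ coeff i v
  let w : (MvPolynomial ℕ ℤ)⟦X⟧ := mk fun i ↦ MvPolynomial.X i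
  have hw : map φ w = v := by ext i; simp [φ, w]
  have hd : map φ (d⁄dX _ w) = d⁄dX R v := by ext i; simp [coeff_derivative, φ, w]
  rw [← hd, ← hw, ← map_pow, ← map_mul, coeff_map, generic, ← map_pow, coeff_map]

section Laurent

theorem mem_Icc_of_coeff_ne_zero {x y : R⸨X⸩} {a i : ℤ} (hx : x.coeff i ≠ 0)
    (hy : y.coeff (a - i) ≠ 0) : i ∈ Set.Icc x.order (a - y.order) :=
  ⟨HahnSeries.order_le_of_coeff_ne_zero hx, by
    have := HahnSeries.order_le_of_coeff_ne_zero hy; omega⟩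

theorem finite_support_mul_coeff (x y : R⸨X⸩) (a : ℤ) :
    (Function.support fun i : ℤ ↦ x.coeff i * y.coeff (a - i)).Finite :=
  (Set.finite_Icc _ _).subset fun _ hi ↦
    mem_Icc_of_coeff_ne_zero (left_ne_zero_of_mul hi) (right_ne_zero_of_mul hi)

theorem coeff_mul_eq_finsum (x y : R⸨X⸩) (a : ℤ) :
    (x * y).coeff a = ∑ᶠ i : ℤ, x.coeff i * y.coeff (a - i) := by
  rw [HahnSeries.coeff_mul, finsum_eq_sum_of_support_subset (s := (antidiagonal x.isPWO_support
    y.isPWO_support a).image Prod.fst), sum_image]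
  · refine sum_congr rfl fun p hp ↦ ?_
    rw [← (Finset.mem_antidiagonal.mp hp).2.2, add_sub_cancel_left]
  · intro p hp q hq hpq
    simp only [mem_coe, Finset.mem_antidiagonal] at hp hq
    exact Prod.ext hpq (by omega)
  · intro i hi
    simp only [coe_image, Set.mem_image, mem_coe, Finset.mem_antidiagonal]
    exact ⟨(i, a - i), ⟨left_ne_zero_of_mul hi, right_ne_zero_of_mul hi, by simp⟩, rfl⟩

theorem hasseDeriv_mul (n : ℕ) (x y : R⸨X⸩) :
    hasseDeriv R n (x * y) = ∑ p ∈ antidiagonal n, hasseDeriv R p.1 x * hasseDeriv R p.2 y := by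
  ext a
  have hterm (p : ℕ × ℕ) (hp : p ∈ antidiagonal n) :
      (hasseDeriv R p.1 x * hasseDeriv R p.2 y).coeff a = ∑ᶠ i : ℤ,
        ((Ring.choose i p.1 * Ring.choose (a + n - i) p.2 : ℤ) : R) *
          (x.coeff i * y.coeff (a + n - i)) := by
    rw [coeff_mul_eq_finsum, ← finsum_comp_equiv (Equiv.subRight (p.1 : ℤ))]
    refine finsum_congr fun i ↦ ?_
    have hn : (p.1 : ℤ) + p.2 = n := by exact_mod_cast mem_antidiagonal.mp hp
    have he : a - (i - p.1) + (p.2 : ℤ) = a + n - i := by omega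
    simp only [hasseDeriv_coeff, Equiv.subRight_apply, zsmul_eq_mul, sub_add_cancel, he]
    push_cast
    ring
  rw [hasseDeriv_coeff, coeff_mul_eq_finsum, HahnSeries.coeff_sum, sum_congr rfl hterm,
    ← finsum_sum_comm, smul_finsum' _ (finite_support_mul_coeff _ _ _)]
  · refine finsum_congr fun i ↦ ?_
    rw [← sum_mul, ← Int.cast_sum, ← Ring.add_choose_eq _ (Commute.all _ _), zsmul_eq_mul,
      add_sub_cancel]
  · exact fun p _ ↦ (finite_support_mul_coeff x y (a + n)).subset fun i hi ↦
      right_ne_zero_of_mul hi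

theorem coeff_neg_one_pow_mul (k : ℕ) (x : R⸨X⸩) (a : ℤ) :
    ((-1) ^ k * x).coeff a = (-1) ^ k * x.coeff a := by
  rcases Nat.even_or_odd k with h | h <;> simp [h.neg_one_pow]

theorem residue_hasseDeriv_mul (k : ℕ) (x y : R⸨X⸩) :
    (hasseDeriv R k x * y).coeff (-1) = (-1) ^ k * (x * hasseDeriv R k y).coeff (-1) := by
  rw [coeff_mul_eq_finsum, coeff_mul_eq_finsum, mul_finsum' _ _ (finite_support_mul_coeff _ _ _),
    ← finsum_comp_equiv (Equiv.subRight (k : ℤ))]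
  refine finsum_congr fun i ↦ ?_
  have hchoose := choose_neg_one_sub (-1 - i) k
  have he : -1 - (i - (k : ℤ)) = -1 - i + k := by ring
  rw [sub_sub_cancel] at hchoose
  simp only [hasseDeriv_coeff, Equiv.subRight_apply, zsmul_eq_mul, sub_add_cancel, he, hchoose]
  push_cast
  ring

/-- The Taylor expansion `f(z) ↦ f(z + t)`, a ring homomorphism `R((z)) → R((z))⟦t⟧`. -/
noncomputable def taylor : R⸨X⸩ →+* R⸨X⸩⟦X⟧ where
  toFun x := mk fun k ↦ hasseDeriv R k x
  map_zero' := by ext; simp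
  map_add' x y := by ext; simp
  map_one' := by
    ext k : 1
    rw [coeff_mk, coeff_one, ← HahnSeries.single_zero_one, hasseDeriv_single]
    rcases k with _ | k
    · simp
    · simp [Ring.choose_zero_succ]
  map_mul' x y := by ext k : 1; simp [coeff_mul, hasseDeriv_mul]

@[simp]
theorem coeff_taylor (k : ℕ) (x : R⸨X⸩) : coeff k (taylor x) = hasseDeriv R k x := by
  simp [taylor]

end Laurent

section CoefficientwiseHasse

/-- The Hasse derivative with respect to `z` on `R((z))⟦w⟧`. -/
noncomputable def zHasseDeriv (k : ℕ) : R⸨X⸩⟦X⟧ →+ R⸨X⸩⟦X⟧ where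
  toFun u := mk fun n ↦ hasseDeriv R k (coeff n u)
  map_zero' := by ext; simp
  map_add' u v := by ext; simp

@[simp]
theorem coeff_zHasseDeriv (k n : ℕ) (u : R⸨X⸩⟦X⟧) :
    coeff n (zHasseDeriv k u) = hasseDeriv R k (coeff n u) := by
  simp [zHasseDeriv]

/-- The Taylor expansion `u(z, w) ↦ u(z + t, w)`, a ring homomorphism
`R((z))⟦w⟧ → R((z))⟦w⟧⟦t⟧`. -/
noncomputable def zTaylor : R⸨X⸩⟦X⟧ →+* R⸨X⸩⟦X⟧⟦X⟧ where
  toFun u := mk fun k ↦ zHasseDeriv k u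
  map_zero' := by ext; simp
  map_add' x y := by ext; simp
  map_one' := by
    ext k n : 2
    have hone := congrArg (coeff k) (map_one (taylor (R := R)))
    rw [coeff_taylor, coeff_one] at hone
    rw [coeff_mk, coeff_zHasseDeriv, coeff_one, coeff_one]
    split_ifs <;> simp_all [coeff_one]
  map_mul' u v := by
    ext k n : 2
    simp only [coeff_mk, coeff_zHasseDeriv, coeff_mul, map_sum, hasseDeriv_mul]
    exact sum_comm

@[simp]
theorem coeff_zTaylor (k : ℕ) (u : R⸨X⸩⟦X⟧) : coeff k (zTaylor u) = zHasseDeriv k u := by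
  simp [zTaylor]

theorem zTaylor_zHasseDeriv_one (u : R⸨X⸩⟦X⟧) :
    zTaylor (zHasseDeriv 1 u) = d⁄dX R⸨X⸩⟦X⟧ (zTaylor u) := by
  ext k n : 2
  rw [coeff_derivative, mul_comm, ← Nat.cast_succ, ← nsmul_eq_mul, map_nsmul]
  simp [hasseDeriv_comp]

theorem zHasseDeriv_pow_mul (k : ℕ) (u : R⸨X⸩⟦X⟧) :
    zHasseDeriv k (u ^ k * zHasseDeriv 1 u) = zHasseDeriv (k + 1) (u ^ (k + 1)) := by
  simpa [← zTaylor_zHasseDeriv_one, ← map_pow, ← map_mul] using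
    coeff_pow_mul_derivative (zTaylor u) k

end CoefficientwiseHasse

section Substitution

/-- The increment `y - z` of a change of variables `z ↦ y` with `y ∈ R((z))⟦w⟧`. -/
noncomputable def increment (y : R⸨X⸩⟦X⟧) : R⸨X⸩⟦X⟧ :=
  y - C (HahnSeries.single 1 1)

variable {y : R⸨X⸩⟦X⟧}

theorem constantCoeff_increment (hy : constantCoeff y = HahnSeries.single 1 1) :
    constantCoeff (increment y) = 0 := by
  rw [increment, map_sub, hy, constantCoeff_C, sub_self]

theorem coeff_increment_pow_eq_zero (hy : constantCoeff y = HahnSeries.single 1 1) {n k : ℕ}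
    (h : n < k) : coeff n (increment y ^ k) = 0 :=
  coeff_of_lt_order _ <| (Nat.cast_lt.mpr h).trans_le <|
    le_order_pow_of_constantCoeff_eq_zero k (constantCoeff_increment hy)

theorem zHasseDeriv_one_eq_add_increment (y : R⸨X⸩⟦X⟧) :
    zHasseDeriv 1 y = 1 + zHasseDeriv 1 (increment y) := by
  have hz : zHasseDeriv 1 (C (HahnSeries.single 1 1) : R⸨X⸩⟦X⟧) = 1 := by
    ext n : 1
    rw [coeff_zHasseDeriv, coeff_C, coeff_one, apply_ite (hasseDeriv R 1), map_zero,
      hasseDeriv_single]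
    simp
  rw [increment, map_sub, hz, add_sub_cancel]

theorem sum_hasseDeriv_coeff_increment_pow_mul (hy : constantCoeff y = HahnSeries.single 1 1)
    (n : ℕ) :
    ∑ k ∈ range (n + 1), (-1) ^ k *
      hasseDeriv R k (coeff n (increment y ^ k * zHasseDeriv 1 y)) = coeff n 1 := by
  have hstep (k : ℕ) : (-1) ^ k *
      hasseDeriv R k (coeff n (increment y ^ k * zHasseDeriv 1 y)) =
      (-1) ^ k * hasseDeriv R k (coeff n (increment y ^ k)) -
        (-1) ^ (k + 1) * hasseDeriv R (k + 1) (coeff n (increment y ^ (k + 1))) := by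
    have h := congrArg (coeff n) (zHasseDeriv_pow_mul k (increment y))
    rw [coeff_zHasseDeriv, coeff_zHasseDeriv] at h
    rw [zHasseDeriv_one_eq_add_increment, mul_add, mul_one, map_add, map_add, h]
    ring
  rw [sum_congr rfl fun k _ ↦ hstep k,
    sum_range_sub' fun k ↦ (-1) ^ k * hasseDeriv R k (coeff n (increment y ^ k)),
    coeff_increment_pow_eq_zero hy n.lt_succ_self]
  simp

/-- The change of variables `f(z) ↦ f(y)` for `y ∈ R((z))⟦w⟧` with `y ≡ z (mod w)`, obtained from
the Taylor expansion `f(z + t)` at `t = y - z`. -/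
noncomputable def laurentSubst (hy : constantCoeff y = HahnSeries.single 1 1) : R⸨X⸩ →+* R⸨X⸩⟦X⟧ :=
  (substAlgHom (HasSubst.of_constantCoeff_zero' (constantCoeff_increment hy))).toRingHom.comp taylor

variable (hy : constantCoeff y = HahnSeries.single 1 1)

theorem coeff_laurentSubst_of_lt {n N : ℕ} (hn : n < N) (x : R⸨X⸩) :
    coeff n (laurentSubst hy x) =
      ∑ k ∈ range N, hasseDeriv R k x * coeff n (increment y ^ k) := by
  have hs := HasSubst.of_constantCoeff_zero' (constantCoeff_increment hy)
  have hsubst : laurentSubst hy x = (taylor x).subst (increment y) :=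
    congrFun (coe_substAlgHom hs) (taylor x)
  rw [hsubst, coeff_subst' hs, finsum_eq_sum_of_support_subset (s := range N)]
  · simp
  · intro k hk
    by_contra hkN
    refine hk ?_
    rw [coe_range, Set.mem_Iio, not_lt] at hkN
    simp only [coeff_increment_pow_eq_zero hy (hn.trans_le hkN), smul_zero]

theorem coeff_laurentSubst (n : ℕ) (x : R⸨X⸩) :
    coeff n (laurentSubst hy x) =
      ∑ k ∈ range (n + 1), hasseDeriv R k x * coeff n (increment y ^ k) :=
  coeff_laurentSubst_of_lt hy n.lt_succ_self x

theorem coeff_zero_laurentSubst (x : R⸨X⸩) : coeff 0 (laurentSubst hy x) = x := by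
  simp [coeff_laurentSubst]

theorem laurentSubst_single_one : laurentSubst hy (HahnSeries.single 1 1) = y := by
  ext n : 1
  have hchoose (k : ℕ) : Ring.choose (1 : ℤ) (k + 1 + 1) = 0 := by
    simpa [Nat.choose_eq_zero_of_lt] using Ring.choose_natCast (R := ℤ) 1 (k + 1 + 1)
  rw [coeff_laurentSubst_of_lt hy (show n < n + 2 by omega), sum_range_succ', sum_range_succ',
    sum_eq_zero fun k _ ↦ by rw [hasseDeriv_single, hchoose]; simp]
  rcases n with _ | n
  · simp [increment, hy]
  · simp [increment, coeff_one]

theorem laurentSubst_single_natCast (m : ℕ) :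
    laurentSubst hy (HahnSeries.single (m : ℤ) 1) = y ^ m := by
  have hm : HahnSeries.single (m : ℤ) (1 : R) = HahnSeries.single 1 1 ^ m := by simp
  rw [hm, map_pow, laurentSubst_single_one]

theorem coeff_laurentSubst_mul (n : ℕ) (x : R⸨X⸩) (v : R⸨X⸩⟦X⟧) :
    coeff n (laurentSubst hy x * v) =
      ∑ k ∈ range (n + 1), hasseDeriv R k x * coeff n (increment y ^ k * v) := by
  simp only [coeff_mul, mul_sum]
  rw [sum_comm]
  refine sum_congr rfl fun p hp ↦ ?_
  have hlt : p.1 < n + 1 := Nat.lt_succ_of_le (HasAntidiagonal.antidiagonal.fst_le hp)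
  rw [coeff_laurentSubst_of_lt hy hlt, sum_mul]
  exact sum_congr rfl fun _ _ ↦ mul_assoc _ _ _

theorem residue_laurentSubst (n : ℕ) (x : R⸨X⸩) :
    (coeff n (laurentSubst hy x * zHasseDeriv 1 y)).coeff (-1) =
      (coeff n (C x)).coeff (-1) := by
  rw [coeff_laurentSubst_mul, HahnSeries.coeff_sum]
  simp only [residue_hasseDeriv_mul, ← coeff_neg_one_pow_mul, mul_left_comm _ x]
  rw [← HahnSeries.coeff_sum, ← mul_sum, sum_hasseDeriv_coeff_increment_pow_mul hy, ← coeff_C_mul,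
    mul_one]

end Substitution

section OneVariable

theorem exists_coeff_eq_of_isLaurent {f : ℤ → R} (hf : IsLaurent f) : ∃ x : R⸨X⸩, x.coeff = f := by
  obtain ⟨N, hN⟩ := hf
  exact ⟨HahnSeries.ofSuppBddBelow f ⟨N, fun i hi ↦ not_lt.mp fun h ↦ hi (hN i h)⟩, rfl⟩

theorem oneS_eq_coeff : oneS R = (1 : R⸨X⸩).coeff := by
  ext a
  simp [oneS, HahnSeries.coeff_one]

theorem mulS_coeff (x y : R⸨X⸩) : mulS x.coeff y.coeff = (x * y).coeff := by
  ext a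
  simp [mulS, coeff_mul_eq_finsum]

theorem pow1_coeff (x : R⸨X⸩) (k : ℕ) : pow1 x.coeff k = (x ^ k).coeff := by
  induction k with
  | zero => simp [pow1, oneS_eq_coeff]
  | succ k ih => rw [pow1, ih, mulS_coeff, pow_succ']

theorem mk_one_subst_one_sub {q : R⟦X⟧} (hq : constantCoeff q = 1) :
    (PowerSeries.mk 1 : R⟦X⟧).subst (1 - q) = invOfUnit q 1 := by
  have hs : HasSubst (1 - q) := HasSubst.of_constantCoeff_zero' (by simp [hq])
  have hinv : (PowerSeries.mk 1 : R⟦X⟧).subst (1 - q) * q = 1 := by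
    simpa only [map_mul, map_sub, map_one, substAlgHom_X, coe_substAlgHom, sub_sub_cancel] using
      congrArg (substAlgHom hs) (mk_one_mul_one_sub_eq_one R)
  calc (PowerSeries.mk 1 : R⟦X⟧).subst (1 - q)
      = (PowerSeries.mk 1 : R⟦X⟧).subst (1 - q) * q * invOfUnit q 1 := by
        rw [mul_assoc, mul_invOfUnit q 1 (by simp [hq]), mul_one]
    _ = invOfUnit q 1 := by rw [hinv, one_mul]

theorem invOne_coeff {q : R⟦X⟧} (hq : constantCoeff q = 1) :
    invOne (q : R⸨X⸩).coeff = (invOfUnit q 1 : R⸨X⸩).coeff := by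
  have hs : HasSubst (1 - q) := HasSubst.of_constantCoeff_zero' (by simp [hq])
  have hone : hOneS (q : R⸨X⸩).coeff = (((q - 1 : R⟦X⟧) : R⸨X⸩)).coeff := by
    ext a
    simp [hOneS, oneS_eq_coeff]
  ext a
  have hterm (k : ℕ) : (-1) ^ k * pow1 (hOneS (q : R⸨X⸩).coeff) k a =
      (((1 - q) ^ k : R⟦X⟧) : R⸨X⸩).coeff a := by
    rw [hone, pow1_coeff, ← coeff_neg_one_pow_mul, ← mul_pow]
    simp
  simp only [invOne, hterm, ← mk_one_subst_one_sub hq, PowerSeries.coeff_coe]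
  split_ifs
  · exact finsum_zero
  · simp [coeff_subst' hs]

end OneVariable

section TwoVariables

/-- The coefficient function of an element of `R((z))((w))`: the first argument is the exponent of
`z`, the second one that of `w`. -/
def coeffFun (x : R⸨X⸩⸨X⸩) : ℤ → ℤ → R := fun a b ↦ (x.coeff b).coeff a

theorem coeffFun_natCast (y : R⸨X⸩⟦X⟧) (a : ℤ) (n : ℕ) :
    coeffFun (y : R⸨X⸩⸨X⸩) a n = (coeff n y).coeff a := by
  rw [coeffFun, coeff_coe_powerSeries]

theorem oneS2_eq_coeffFun : oneS2 R = coeffFun 1 := by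
  ext a b
  by_cases hb : b = 0 <;> simp [oneS2, coeffFun, HahnSeries.coeff_one, hb]

theorem mulS2_coeffFun (x y : R⸨X⸩⸨X⸩) :
    mulS2 (coeffFun x) (coeffFun y) = coeffFun (x * y) := by
  ext a b
  have hfin : (Function.support fun p : ℤ × ℤ ↦
      (x.coeff p.1).coeff p.2 * (y.coeff (b - p.1)).coeff (a - p.2)).Finite := by
    refine ((Set.finite_Icc x.order (b - y.order)).biUnion fun j _ ↦
      (finite_support_mul_coeff (x.coeff j) (y.coeff (b - j)) a).image (Prod.mk j)).subset ?_
    rintro ⟨j, i⟩ hij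
    refine Set.mem_biUnion (mem_Icc_of_coeff_ne_zero (fun h ↦ ?_) fun h ↦ ?_) ⟨i, hij, rfl⟩
    · exact hij (by simp [h])
    · exact hij (by simp [h])
  rw [mulS2, ← finsum_comp_equiv (Equiv.prodComm ℤ ℤ)]
  simp only [coeffFun, coeff_mul_eq_finsum, smul_eq_mul, Equiv.prodComm_apply, Prod.fst_swap,
    Prod.snd_swap]
  rw [finsum_curry _ hfin, ← HahnSeries.coeff.addMonoidHom_apply,
    map_finsum _ (finite_support_mul_coeff x y b)]
  simp only [HahnSeries.coeff.addMonoidHom_apply, coeff_mul_eq_finsum]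

theorem pow2_coeffFun (x : R⸨X⸩⸨X⸩) (k : ℕ) : pow2 (coeffFun x) k = coeffFun (x ^ k) := by
  induction k with
  | zero => rw [pow2, oneS2_eq_coeffFun, pow_zero]
  | succ k ih => rw [pow2, ih, mulS2_coeffFun, pow_succ']

theorem pow2_coeffFun_coe (y : R⸨X⸩⟦X⟧) (k : ℕ) (a : ℤ) (n : ℕ) :
    pow2 (coeffFun (y : R⸨X⸩⸨X⸩)) k a n = (coeff n (y ^ k)).coeff a := by
  rw [pow2_coeffFun, ← PowerSeries.coe_pow, coeffFun_natCast]

theorem hzS_coeffFun (y : R⸨X⸩⟦X⟧) : hzS (coeffFun (y : R⸨X⸩⸨X⸩)) =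
    coeffFun ((C (HahnSeries.single (-1) 1) * increment y : R⸨X⸩⟦X⟧) : R⸨X⸩⸨X⸩) := by
  ext a b
  simp [hzS, oneS2_eq_coeffFun, coeffFun, increment, mul_sub, HahnSeries.coeff_single_mul]

theorem pow2_hzS_coeffFun (y : R⸨X⸩⟦X⟧) (k n : ℕ) (a : ℤ) :
    pow2 (hzS (coeffFun (y : R⸨X⸩⸨X⸩))) k a n = (coeff n (increment y ^ k)).coeff (a + k) := by
  rw [hzS_coeffFun, pow2_coeffFun_coe, mul_pow, ← map_pow, coeff_C_mul, HahnSeries.single_pow,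
    one_pow, HahnSeries.coeff_single_mul, one_mul]
  congr 1
  simp

theorem pow2_swap {f : ℤ → ℤ → R} (hf : ∀ i j, f i j = f j i) (k : ℕ) (a b : ℤ) :
    pow2 f k a b = pow2 f k b a := by
  induction k generalizing a b with
  | zero => simp [pow2, oneS2, and_comm]
  | succ k ih =>
    rw [pow2, mulS2, mulS2, ← finsum_comp_equiv (Equiv.prodComm ℤ ℤ)]
    exact finsum_congr fun p ↦ by simp [hf p.2 p.1, ih (a - p.2)]

end TwoVariables

section IntegerPowers

variable {y : R⸨X⸩⟦X⟧} (hy : constantCoeff y = HahnSeries.single 1 1)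

theorem izwPow_coeffFun (m a : ℤ) (n : ℕ) :
    izwPow (coeffFun (y : R⸨X⸩⸨X⸩)) m a n =
      (coeff n (laurentSubst hy (HahnSeries.single m 1))).coeff a := by
  rw [izwPow, finsum_eq_sum_of_support_subset (s := range (n + 1)), coeff_laurentSubst,
    HahnSeries.coeff_sum]
  · refine sum_congr rfl fun k _ ↦ ?_
    rw [zbinom_eq_choose, pow2_hzS_coeffFun, hasseDeriv_single, HahnSeries.coeff_single_mul,
      zsmul_one, ← sub_add]
  · intro k hk
    by_contra hkn
    refine hk ?_
    rw [coe_range, Set.mem_Iio, not_lt] at hkn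
    simp only [pow2_hzS_coeffFun, coeff_increment_pow_eq_zero hy hkn, HahnSeries.coeff_zero,
      mul_zero]

theorem finsum_mul_izwPow_coeffFun (x : R⸨X⸩) (a : ℤ) (n : ℕ) :
    ∑ᶠ m : ℤ, x.coeff m * izwPow (coeffFun (y : R⸨X⸩⸨X⸩)) m a n =
      (coeff n (laurentSubst hy x)).coeff a := by
  have hterm (k : ℕ) (m : ℤ) :
      x.coeff m * (hasseDeriv R k (HahnSeries.single m 1) * coeff n (increment y ^ k)).coeff a =
        (hasseDeriv R k x).coeff (m - k) * (coeff n (increment y ^ k)).coeff (a - (m - k)) := by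
    rw [hasseDeriv_single, HahnSeries.coeff_single_mul, hasseDeriv_coeff, sub_add_cancel,
      zsmul_one, zsmul_eq_mul]
    ring
  simp only [izwPow_coeffFun hy, coeff_laurentSubst, HahnSeries.coeff_sum, mul_sum, hterm]
  rw [finsum_sum_comm]
  · refine sum_congr rfl fun k _ ↦ ?_
    rw [coeff_mul_eq_finsum]
    exact finsum_comp_equiv (Equiv.subRight (k : ℤ)) (f := fun i ↦
      (hasseDeriv R k x).coeff i * (coeff n (increment y ^ k)).coeff (a - i))
  · intro k _
    exact (finite_support_mul_coeff (hasseDeriv R k x) (coeff n (increment y ^ k)) a).preimage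
      (Equiv.subRight (k : ℤ)).injective.injOn

theorem coeff_laurentSubst_coe (q : R⟦X⟧) (a : ℤ) (n : ℕ) :
    (coeff n (laurentSubst hy (q : R⸨X⸩))).coeff a =
      ∑ᶠ m : ℕ, coeff m q * (coeff n (y ^ m)).coeff a := by
  rw [← finsum_mul_izwPow_coeffFun, finsum_int_eq_finsum_nat fun m hm ↦ ?_]
  · simp only [izwPow_coeffFun hy, laurentSubst_single_natCast, coeff_coe_powerSeries]
  · rw [PowerSeries.coeff_coe, if_pos hm, zero_mul]

end IntegerPowers

end FormalCalculus

namespace FormalGroupLaw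

open PowerSeries LaurentSeries Finset FormalCalculus

variable {R : Type*} [CommRing R] (𝓕 : FormalGroupLaw R)

/-- The formal group law `F(z, w)` as an element of `R((z))⟦w⟧`. -/
noncomputable def series : R⸨X⸩⟦X⟧ :=
  PowerSeries.mk fun n ↦ ((PowerSeries.mk fun m ↦ 𝓕.F m n : R⟦X⟧) : R⸨X⸩)

/-- The power series `F^{0,1}(z, 0)`, whose inverse is `p_F(z)`. -/
noncomputable def slope : R⟦X⟧ := PowerSeries.mk fun m ↦ 𝓕.F m 1

theorem coeff_one_series : coeff 1 𝓕.series = 𝓕.slope := by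
  simp [series, slope]

theorem coeffFun_series : coeffFun (𝓕.series : R⸨X⸩⸨X⸩) = 𝓕.F := by
  ext a b
  rcases lt_or_ge b 0 with hb | hb
  · rw [𝓕.F_supp a b (Or.inr hb), coeffFun, PowerSeries.coeff_coe, if_pos hb,
      HahnSeries.coeff_zero]
  lift b to ℕ using hb
  rw [coeffFun_natCast, series, coeff_mk, PowerSeries.coeff_coe]
  split_ifs with ha
  · rw [𝓕.F_supp a b (Or.inl ha)]
  · rw [coeff_mk, Int.natAbs_of_nonneg (not_lt.mp ha)]

theorem coeff_coeff_series (n : ℕ) (a : ℤ) : (coeff n 𝓕.series).coeff a = 𝓕.F a n := by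
  rw [← coeffFun_natCast, coeffFun_series]

theorem constantCoeff_series : constantCoeff 𝓕.series = HahnSeries.single 1 1 := by
  ext a
  rw [← coeff_zero_eq_constantCoeff_apply, coeff_coeff_series, Nat.cast_zero, 𝓕.F_modw,
    HahnSeries.coeff_single]
  simp

/-- The `F`-translation `f(z) ↦ f(F(z, w))`. -/
noncomputable def translate : R⸨X⸩ →+* R⸨X⸩⟦X⟧ := laurentSubst 𝓕.constantCoeff_series

theorem hyper_coeff (n : ℕ) (x : R⸨X⸩) :
    𝓕.hyper n x.coeff = (coeff n (𝓕.translate x)).coeff := by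
  ext a
  rw [hyper, ← coeffFun_series, finsum_mul_izwPow_coeffFun, translate]

theorem constantCoeff_slope : constantCoeff 𝓕.slope = 1 := by
  rw [slope, ← coeff_zero_eq_constantCoeff_apply, coeff_mk, 𝓕.F_comm, Nat.cast_zero, 𝓕.F_modw,
    if_pos rfl]

theorem pF_eq_coeff : 𝓕.pF = (invOfUnit 𝓕.slope 1 : R⸨X⸩).coeff := by
  rw [← invOne_coeff 𝓕.constantCoeff_slope, pF, ← coeff_one_series]
  congr 1
  ext i
  rw [coeff_coeff_series, Nat.cast_one]

theorem resF_coeff (x : R⸨X⸩) :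
    𝓕.resF x.coeff = ((invOfUnit 𝓕.slope 1 : R⸨X⸩) * x).coeff (-1) := by
  rw [resF, pF_eq_coeff, coeff_mul_eq_finsum]
  rfl

theorem pow2_one_left (m : ℕ) (b : ℤ) : pow2 𝓕.F m 1 b = m * 𝓕.F (b - (m - 1)) 1 := by
  rcases m with _ | m
  · simp [pow2, oneS2]
  rw [pow2_swap 𝓕.F_comm, ← coeffFun_series, ← Nat.cast_one (R := ℤ), pow2_coeffFun_coe,
    coeff_one_pow, constantCoeff_series, HahnSeries.single_pow, coeffFun_natCast, mul_assoc,
    ← nsmul_eq_mul, ← nsmul_eq_mul, mul_comm, HahnSeries.coeff_nsmul, Pi.smul_apply]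
  simp [HahnSeries.coeff_single_mul]

-- The invariance of the differential `p_F(z) dz`: compare the coefficients of `v¹` in
-- `F(F(v, z), w) = F(v, F(z, w))`.
theorem translate_slope :
    𝓕.translate 𝓕.slope = zHasseDeriv 1 𝓕.series * C (𝓕.slope : R⸨X⸩) := by
  ext c b
  have hleft : (coeff c (𝓕.translate 𝓕.slope)).coeff b =
      ∑ᶠ n : ℕ, 𝓕.F 1 n * pow2 𝓕.F n b c := by
    rw [translate, coeff_laurentSubst_coe]
    refine finsum_congr fun n ↦ ?_
    rw [← pow2_coeffFun_coe, coeffFun_series, slope, coeff_mk, 𝓕.F_comm]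
  have hright : (coeff c (zHasseDeriv 1 𝓕.series * C (𝓕.slope : R⸨X⸩))).coeff b =
      ∑ᶠ m : ℕ, 𝓕.F m c * pow2 𝓕.F m 1 b := by
    rw [coeff_mul_C, coeff_mul_eq_finsum, ← finsum_comp_equiv (Equiv.subRight (1 : ℤ)),
      finsum_int_eq_finsum_nat fun m hm ↦ ?_]
    · refine finsum_congr fun m ↦ ?_
      simp only [coeff_zHasseDeriv, Equiv.subRight_apply, hasseDeriv_coeff, Nat.cast_one,
        sub_add_cancel, Ring.choose_one_right', pow_one, coeff_coeff_series, zsmul_eq_mul,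
        Int.cast_natCast, ← coeff_one_series, pow2_one_left]
      ring
    · simp [coeff_coeff_series, 𝓕.F_supp m c (Or.inl hm)]
  rw [hleft, hright, 𝓕.F_assoc]

theorem coe_invOfUnit_slope_mul_slope :
    (invOfUnit 𝓕.slope 1 : R⸨X⸩) * (𝓕.slope : R⸨X⸩) = 1 := by
  rw [← PowerSeries.coe_mul, mul_comm, mul_invOfUnit _ _ 𝓕.constantCoeff_slope,
    PowerSeries.coe_one]

theorem resF_hyper {n : ℕ} (hn : n ≠ 0) (x : R⸨X⸩) : 𝓕.resF (𝓕.hyper n x.coeff) = 0 := by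
  set p : R⸨X⸩ := (invOfUnit 𝓕.slope 1 : R⸨X⸩) with hp
  have hps : p * (𝓕.slope : R⸨X⸩) = 1 := 𝓕.coe_invOfUnit_slope_mul_slope
  have htranslate : 𝓕.translate x =
      𝓕.translate (x * p) * zHasseDeriv 1 𝓕.series * C (𝓕.slope : R⸨X⸩) := by
    rw [mul_assoc, ← translate_slope, ← map_mul, mul_assoc, hps, mul_one]
  rw [hyper_coeff, resF_coeff, htranslate, coeff_mul_C, mul_left_comm, ← hp, hps, mul_one,
    translate, residue_laurentSubst, coeff_C, if_neg hn, HahnSeries.coeff_zero]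

theorem hyper_zero (x : R⸨X⸩) : 𝓕.hyper 0 x.coeff = x.coeff := by
  rw [hyper_coeff, translate, coeff_zero_laurentSubst]

theorem sum_resF_mulS_hyper {n : ℕ} (hn : n ≠ 0) (x y : R⸨X⸩) :
    ∑ j ∈ range (n + 1), 𝓕.resF (mulS (𝓕.hyper (n - j) x.coeff) (𝓕.hyper j y.coeff)) = 0 := by
  rw [← 𝓕.resF_hyper hn (x * y)]
  simp only [hyper_coeff, mulS_coeff, resF_coeff, map_mul, coeff_mul]
  rw [← Nat.sum_antidiagonal_swap, Nat.sum_antidiagonal_eq_sum_range_succ_mk, mul_sum,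
    HahnSeries.coeff_sum]
  rfl

end FormalGroupLaw

/-- for `f, g ∈ R((z))` and `n ≥ 1`:
(i) `Res^F (𝒮^F_n f) dz = 0`;
(ii) `Res^F (𝒮^F_n f)·g dz = -∑_{j=1}^n Res^F (𝒮^F_{n-j} f)·(𝒮^F_j g) dz`. -/
theorem hyper_residue (R : Type*) [CommRing R] (𝓕 : FormalGroupLaw R)
    (f g : ℤ → R) (hf : IsLaurent f) (hg : IsLaurent g) (n : ℕ) (hn : 1 ≤ n) :
    𝓕.resF (𝓕.hyper n f) = 0 ∧
    𝓕.resF (mulS (𝓕.hyper n f) g)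
      = - ∑ j ∈ Finset.Icc 1 n, 𝓕.resF (mulS (𝓕.hyper (n - j) f) (𝓕.hyper j g)) := by
  have hn' : n ≠ 0 := Nat.one_le_iff_ne_zero.mp hn
  obtain ⟨x, rfl⟩ := FormalCalculus.exists_coeff_eq_of_isLaurent hf
  obtain ⟨y, rfl⟩ := FormalCalculus.exists_coeff_eq_of_isLaurent hg
  have hsum := 𝓕.sum_resF_mulS_hyper hn' x y
  rw [Finset.range_eq_Ico, Finset.sum_eq_sum_Ico_succ_bot n.succ_pos, Nat.sub_zero,
    𝓕.hyper_zero, zero_add, Nat.succ_eq_add_one, Finset.Ico_add_one_right_eq_Icc] at hsum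
  exact ⟨𝓕.resF_hyper hn' x, eq_neg_of_add_eq_zero_left hsum⟩
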